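/- A finite simple graph G is (Z_+, Z)-perfect if and only if G is claw-free; that is, Z_+(H) = Z(H) holds for every induced subgraph H of G if and only if G contains no induced subgraph isomorphic to K_{1,3}. -/

import Mathlib

open SimpleGraph

/-- The standard color change rule: a blue vertex `u ∈ S` with exactly one white
neighbor `v` can force `v` to become blue. -/
def StdStep {V : Type*} (G : SimpleGraph V) (S : Set V) (u v : V) : Prop :=
  u ∈ S ∧ v ∉ S ∧ G.Adj u v ∧ ∀ w : V, G.Adj u w → w ∉ S → w = v

/-- The positive semidefinite color change rule: a blue vertex `u ∈ S` can force a
white vertex `v` if `v` is the unique neighbor of `u` in the connected component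
containing `v` of the subgraph induced on the white vertices `Sᶜ`. -/
def PSDStep {V : Type*} (G : SimpleGraph V) (S : Set V) (u v : V) : Prop :=
  u ∈ S ∧ G.Adj u v ∧ ∃ hv : v ∈ (Sᶜ : Set V),
    ∀ w : V, ∀ hw : w ∈ (Sᶜ : Set V), G.Adj u w →
      (G.induce (Sᶜ : Set V)).Reachable ⟨v, hv⟩ ⟨w, hw⟩ → w = v

/-- `Derives step B S` means the blue set `S` is obtainable from the initial blue
set `B` by iterated application of the color change rule `step`. -/
inductive Derives {V : Type*} (step : Set V → V → V → Prop) : Set V → Set V → Prop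
  | refl (S : Set V) : Derives step S S
  | tail {S T : Set V} {u v : V} : Derives step S T → step T u v → Derives step S (insert v T)

/-- `B` is a standard zero forcing set of `G` if iterating the standard color
change rule from `B` colors all vertices blue. -/
def IsStdForcingSet {V : Type*} (G : SimpleGraph V) (B : Set V) : Prop :=
  Derives (StdStep G) B Set.univ

/-- `B` is a positive semidefinite zero forcing set of `G` if iterating the
positive semidefinite color change rule from `B` colors all vertices blue. -/
def IsPSDForcingSet {V : Type*} (G : SimpleGraph V) (B : Set V) : Prop :=
  Derives (PSDStep G) B Set.univ

/-- The standard zero forcing number `Z(G)`. -/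
noncomputable def Z {V : Type*} (G : SimpleGraph V) : ℕ :=
  sInf {n : ℕ | ∃ B : Set V, IsStdForcingSet G B ∧ B.ncard = n}

/-- The positive semidefinite zero forcing number `Z₊(G)`. -/
noncomputable def Zplus {V : Type*} (G : SimpleGraph V) : ℕ :=
  sInf {n : ℕ | ∃ B : Set V, IsPSDForcingSet G B ∧ B.ncard = n}

/-- A graph is claw-free if no induced subgraph is isomorphic to `K_{1,3}`. -/
def ClawFree {V : Type*} (G : SimpleGraph V) : Prop :=
  ¬ ∃ s : Set V, Nonempty (G.induce s ≃g completeBipartiteGraph (Fin 1) (Fin 3))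

/-- `S` is a minimum positive semidefinite zero forcing set of `G`. -/
def IsMinPSDForcingSet {V : Type*} (G : SimpleGraph V) (S : Set V) : Prop :=
  IsPSDForcingSet G S ∧ ∀ B : Set V, IsPSDForcingSet G B → S.ncard ≤ B.ncard

/-!
Every standard force is a positive semidefinite (PSD) force, so only `Z ≤ Z₊` for claw-free graphs
needs an argument. Start from a PSD forcing set and apply forces that are also standard. When
none applies, let `b` force `v` within a minimal union `K` of white components; `b` also has a white
neighbor `d` outside `K`. Since `v` and `d` are nonadjacent, claw-freeness shows that `b` is an
initial vertex that plays no part in the forces made so far, and hence that `b` may be replaced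
by `v` in the initial set. This root exchange preserves the PSD property and shrinks `K` to
`K \ {v}`; when `K = {v}`, the new blue vertex `v` forces `b` back by the standard rule. In either
case the blue set eventually grows, while the size of the initial set never changes.

Conversely, the center of `K_{1,3}` alone is a PSD forcing set, whereas a standard forcing set
meets every pair of leaves and so has at least two elements.
-/

section

variable {V : Type*} {G : SimpleGraph V} {B S T K : Set V} {b d r u v : V} {n : ℕ}

namespace Derives

variable {step step' : Set V → V → V → Prop} {R : Set V}

theorem subset (h : Derives step S T) : S ⊆ T := by
  induction h with
  | refl => rfl
  | tail _ _ ih => exact ih.trans (Set.subset_insert _ _)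

theorem trans (hRS : Derives step R S) (hST : Derives step S T) : Derives step R T := by
  induction hST with
  | refl => exact hRS
  | tail _ hstep ih => exact ih.tail hstep

theorem head (hstep : step S u v) (h : Derives step (insert v S) T) : Derives step S T :=
  ((refl S).tail hstep).trans h

theorem imp (himp : ∀ S u v, step S u v → step' S u v) (h : Derives step S T) :
    Derives step' S T := by
  induction h with
  | refl => exact refl _
  | tail _ hstep ih => exact ih.tail (himp _ _ _ hstep)

theorem exists_step (h : Derives step S T) (hne : S ≠ T) : ∃ u v, step S u v := by
  induction h with
  | refl => exact absurd rfl hne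
  | @tail T u v _ hstep ih =>
    by_cases hST : S = T
    · exact ⟨u, v, hST ▸ hstep⟩
    · exact ih hST

theorem union_of_subset
    (hmono : ∀ ⦃S S' : Set V⦄ ⦃u v : V⦄, S ⊆ S' → v ∉ S' → step S u v → step S' u v)
    (h : Derives step S T) (hSR : S ⊆ R) : Derives step R (R ∪ T) := by
  induction h with
  | refl => rw [Set.union_eq_left.mpr hSR]; exact refl R
  | @tail T u v _ hstep ih =>
    rw [Set.union_insert]
    by_cases hv : v ∈ R ∪ T
    · rwa [Set.insert_eq_of_mem hv]
    · exact ih.tail (hmono Set.subset_union_right hv hstep)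

end Derives

/-- `K` is a union of connected components of the subgraph induced on the white vertices `Sᶜ`,
expressed without mentioning components. -/
structure IsWhitePart (G : SimpleGraph V) (S K : Set V) : Prop where
  subset_compl : K ⊆ Sᶜ
  mem_of_adj : ∀ ⦃x⦄, x ∈ K → ∀ ⦃y⦄, y ∉ S → G.Adj x y → y ∈ K

/-- `v` is the only neighbor of the blue vertex `u` in the union `K` of white components. This is
the positive semidefinite color change rule with `K` in place of the component of `v`. -/
structure ForcesWithin (G : SimpleGraph V) (S K : Set V) (u v : V) : Prop
    extends IsWhitePart G S K where
  source_mem : u ∈ S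
  adj : G.Adj u v
  target_mem : v ∈ K
  eq_target : ∀ ⦃w⦄, w ∈ K → G.Adj u w → w = v

theorem IsWhitePart.mem_of_reachable (hK : IsWhitePart G S K) {x y : (Sᶜ : Set V)}
    (hx : (x : V) ∈ K) (h : (G.induce Sᶜ).Reachable x y) : (y : V) ∈ K := by
  obtain ⟨p⟩ := h
  induction p with
  | nil => exact hx
  | @cons _ y _ hxy _ ih => exact ih (hK.mem_of_adj hx y.2 hxy)

theorem psdStep_iff_exists_forcesWithin : PSDStep G S u v ↔ ∃ K, ForcesWithin G S K u v := by
  constructor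
  · rintro ⟨hu, huv, hv, hunique⟩
    refine ⟨Subtype.val '' {w : (Sᶜ : Set V) | (G.induce Sᶜ).Reachable ⟨v, hv⟩ w},
      { subset_compl := ?_, mem_of_adj := ?_, source_mem := hu, adj := huv,
        target_mem := ⟨_, Reachable.refl _, rfl⟩, eq_target := ?_ }⟩
    · rintro _ ⟨w, -, rfl⟩
      exact w.2
    · rintro _ ⟨x, hvx, rfl⟩ y hy hxy
      have hadj : (G.induce Sᶜ).Adj x ⟨y, hy⟩ := hxy
      exact ⟨⟨y, hy⟩, hvx.trans hadj.reachable, rfl⟩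
    · rintro _ ⟨w, hvw, rfl⟩ huw
      exact hunique w w.2 huw hvw
  · rintro ⟨K, hK⟩
    exact ⟨hK.source_mem, hK.adj, hK.subset_compl hK.target_mem,
      fun w _ huw hvw => hK.eq_target (hK.mem_of_reachable hK.target_mem hvw) huw⟩

theorem PSDStep.mono (hST : S ⊆ T) (hv : v ∉ T) (h : PSDStep G S u v) : PSDStep G T u v := by
  obtain ⟨K, hK⟩ := psdStep_iff_exists_forcesWithin.mp h
  refine psdStep_iff_exists_forcesWithin.mpr ⟨K \ T,
    { subset_compl := fun _ hx => hx.2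
      mem_of_adj := fun x hx y hy hxy => ⟨hK.mem_of_adj hx.1 (fun h => hy (hST h)) hxy, hy⟩
      source_mem := hST hK.source_mem
      adj := hK.adj
      target_mem := ⟨hK.target_mem, hv⟩
      eq_target := fun w hw => hK.eq_target hw.1 }⟩

theorem StdStep.psdStep (h : StdStep G S u v) : PSDStep G S u v :=
  ⟨h.1, h.2.2.1, h.2.1, fun w hw huw _ => h.2.2.2 w huw hw⟩

theorem IsStdForcingSet.isPSDForcingSet (h : IsStdForcingSet G B) : IsPSDForcingSet G B :=
  Derives.imp (fun _ _ _ => StdStep.psdStep) h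

namespace IsPSDForcingSet

theorem mono (hS : IsPSDForcingSet G S) (hST : S ⊆ T) : IsPSDForcingSet G T := by
  have h := Derives.union_of_subset (step := PSDStep G) (fun _ _ _ _ => PSDStep.mono) hS hST
  rwa [Set.union_univ] at h

theorem exists_forcesWithin_subset (hS : IsPSDForcingSet G S) (hK : IsWhitePart G S K)
    (hne : K.Nonempty) : ∃ b v, ∃ L ⊆ K, ForcesWithin G S L b v := by
  -- Color everything outside `K` blue and look at the first force.
  have hKc : IsPSDForcingSet G Kᶜ := hS.mono (Set.subset_compl_comm.mp hK.subset_compl)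
  obtain ⟨b, v, hstep⟩ := hKc.exists_step (by simpa using hne.ne_empty)
  obtain ⟨L, hL⟩ := psdStep_iff_exists_forcesWithin.mp hstep
  have hLK : L ⊆ K := by simpa using hL.subset_compl
  refine ⟨b, v, L, hLK,
    { subset_compl := hLK.trans hK.subset_compl
      mem_of_adj := fun x hx y hy hxy =>
        hL.mem_of_adj hx (not_not_intro (hK.mem_of_adj (hLK hx) hy hxy)) hxy
      source_mem := ?_
      adj := hL.adj
      target_mem := hL.target_mem
      eq_target := hL.eq_target }⟩
  by_contra hb
  exact hL.source_mem (hK.mem_of_adj (hLK hL.target_mem) hb hL.adj.symm)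

end IsPSDForcingSet

namespace ForcesWithin

theorem notMem (h : ForcesWithin G S K u v) : v ∉ S := h.subset_compl h.target_mem

theorem swap (h : ForcesWithin G S K b v) :
    ForcesWithin G (insert v (S \ {b})) (insert b (Sᶜ \ K)) v b where
  subset_compl := by
    have := h.adj.ne
    have := h.target_mem
    have := h.source_mem
    grind
  mem_of_adj := by
    have := h.mem_of_adj
    have := h.eq_target
    grind [G.adj_comm]
  source_mem := Set.mem_insert _ _
  adj := h.adj.symm
  target_mem := Set.mem_insert _ _
  eq_target := by
    have := h.mem_of_adj h.target_mem
    grind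

theorem isPSDForcingSet_swap (h : ForcesWithin G S K b v) (hS : IsPSDForcingSet G S) :
    IsPSDForcingSet G (insert v (S \ {b})) :=
  Derives.head (psdStep_iff_exists_forcesWithin.mpr ⟨_, h.swap⟩) (hS.mono (by grind))

theorem isWhitePart_sdiff_singleton (h : ForcesWithin G S K b v) :
    IsWhitePart G (insert v (S \ {b})) (K \ {v}) where
  subset_compl := by
    have := h.subset_compl
    grind
  mem_of_adj := by
    have := h.mem_of_adj
    have := h.eq_target
    grind [G.adj_comm]

theorem stdStep_swap_of_eq_singleton (h : ForcesWithin G S {v} b v) :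
    StdStep G (insert v (S \ {b})) v b := by
  have := h.adj.ne
  have := h.source_mem
  have := h.mem_of_adj h.target_mem
  exact ⟨Set.mem_insert _ _, by grind, h.adj.symm, by grind⟩

theorem stdStep_or_exists_adj_notMem (h : ForcesWithin G S K u v) :
    StdStep G S u v ∨ ∃ d ∉ S, d ∉ K ∧ G.Adj u d := by
  by_contra! hcon
  exact hcon.1 ⟨h.source_mem, h.notMem, h.adj,
    fun w huw hw => h.eq_target (by_contra fun hwK => hcon.2 w hw hwK huw) huw⟩

end ForcesWithin

section ClawFree

theorem completeBipartiteGraph_isIndContained {α β : Type*} [Subsingleton α] (c : V) (l : β → V)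
    (hinj : Function.Injective l) (hcl : ∀ i, G.Adj c (l i)) (hl : ∀ i j, ¬ G.Adj (l i) (l j)) :
    (completeBipartiteGraph α β).IsIndContained G := by
  refine ⟨⟨⟨Sum.elim (fun _ => c) l, ?_⟩, ?_⟩⟩
  · exact Function.Injective.sumElim (fun _ _ _ => Subsingleton.elim _ _) hinj
      fun _ i => (hcl i).ne
  · rintro (a | a) (b | b) <;> simp [hcl, hl, G.adj_comm _ c]

theorem clawFree_iff_not_isIndContained :
    ClawFree G ↔ ¬ (completeBipartiteGraph (Fin 1) (Fin 3)).IsIndContained G := by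
  refine not_congr ⟨?_, ?_⟩
  · rintro ⟨s, ⟨e⟩⟩
    exact ⟨(Embedding.induce s).comp e.symm.toEmbedding⟩
  · rintro ⟨f⟩
    exact ⟨Set.range f, ⟨f.isoInduceRange.symm⟩⟩

theorem ClawFree.induce (hG : ClawFree G) (s : Set V) : ClawFree (G.induce s) :=
  clawFree_iff_not_isIndContained.mpr fun h =>
    clawFree_iff_not_isIndContained.mp hG (h.trans ⟨Embedding.induce s⟩)

theorem ClawFree.adj_or_adj_or_adj (hG : ClawFree G) {c x y z : V} (hx : G.Adj c x)
    (hy : G.Adj c y) (hz : G.Adj c z) (hxy : x ≠ y) (hxz : x ≠ z) (hyz : y ≠ z) :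
    G.Adj x y ∨ G.Adj x z ∨ G.Adj y z := by
  by_contra! hcon
  obtain ⟨nxy, nxz, nyz⟩ := hcon
  refine clawFree_iff_not_isIndContained.mp hG
    (completeBipartiteGraph_isIndContained c ![x, y, z] ?_ ?_ ?_)
  · intro i j
    fin_cases i <;> fin_cases j <;> simp [hxy, hxz, hyz, hxy.symm, hxz.symm, hyz.symm]
  · simp [Fin.forall_fin_succ, hx, hy, hz]
  · simp [Fin.forall_fin_succ, nxy, nxz, nyz, G.adj_comm z, G.adj_comm y x]

-- A vertex that forced `b`, or that made a force while adjacent to `b`, would be the third leaf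
-- of a claw with center `b` and leaves `v`, `d`.
theorem ClawFree.derives_swap (hG : ClawFree G) (h : Derives (StdStep G) B S) (hb : b ∈ S)
    (hv : v ∉ S) (hd : d ∉ S) (hbv : G.Adj b v) (hbd : G.Adj b d) (hne : v ≠ d)
    (hvd : ¬ G.Adj v d) :
    b ∈ B ∧ Derives (StdStep G) (insert v (B \ {b})) (insert v (S \ {b})) := by
  induction h with
  | refl => exact ⟨hb, Derives.refl _⟩
  | @tail S u w _ hstep ih =>
    obtain ⟨huS, hwS, huw, hunique⟩ := hstep
    simp only [Set.mem_insert_iff, not_or] at hb hv hd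
    have hub : ¬ G.Adj b u := by
      intro hbu
      have huv : ¬ G.Adj v u := fun h => hv.1 (hunique v h.symm hv.2)
      have hud : ¬ G.Adj d u := fun h => hd.1 (hunique d h.symm hd.2)
      have := hG.adj_or_adj_or_adj hbv hbd hbu hne (by grind) (by grind)
      tauto
    have hbw : b ≠ w := by
      rintro rfl
      exact hub huw.symm
    obtain ⟨hbB, hder⟩ := ih (hb.resolve_left hbw) hv.2 hd.2
    have hune : u ≠ b := by
      rintro rfl
      exact hv.1 (hunique v hbv hv.2)
    have hstep : StdStep G (insert v (S \ {b})) u w :=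
      ⟨by grind, by grind, huw, fun x hux hx => hunique x hux (by grind [G.adj_comm])⟩
    refine ⟨hbB, ?_⟩
    convert hder.tail hstep using 1
    grind

end ClawFree

/-- The blue set `S` arises by standard forces from some initial set of `n` vertices.
Remembering only `n` lets the initial set vary during root exchanges. -/
def IsStdReachable (G : SimpleGraph V) (n : ℕ) (S : Set V) : Prop :=
  ∃ B, Derives (StdStep G) B S ∧ B.ncard = n

theorem IsStdReachable.insert (h : IsStdReachable G n S) (hstep : StdStep G S u v) :
    IsStdReachable G n (insert v S) :=
  let ⟨B, hB, hn⟩ := h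
  ⟨B, hB.tail hstep, hn⟩

theorem ForcesWithin.isStdReachable_swap (hbv : ForcesWithin G S K b v) (hG : ClawFree G)
    (hS : IsStdReachable G n S) (hd : d ∉ S) (hdK : d ∉ K) (hbd : G.Adj b d) :
    IsStdReachable G n (insert v (S \ {b})) := by
  obtain ⟨B, hB, rfl⟩ := hS
  obtain ⟨hbB, hswap⟩ := hG.derives_swap hB hbv.source_mem hbv.notMem hd hbv.adj hbd
    (fun h => hdK (h ▸ hbv.target_mem)) (fun h => hdK (hbv.mem_of_adj hbv.target_mem hd h))
  exact ⟨_, hswap, Set.ncard_exchange (fun h => hbv.notMem (hB.subset h)) hbB⟩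

theorem ClawFree.exists_isStdReachable_ncard_lt [Finite V] (hG : ClawFree G)
    (hS : IsStdReachable G n S) (hpsd : IsPSDForcingSet G S) (hK : IsWhitePart G S K)
    (hne : K.Nonempty) :
    ∃ T, IsStdReachable G n T ∧ IsPSDForcingSet G T ∧ S.ncard < T.ncard := by
  induction hk : K.ncard using Nat.strong_induction_on generalizing K S with
  | _ k ih =>
  subst hk
  obtain ⟨b, v, L, hLK, hL⟩ := hpsd.exists_forcesWithin_subset hK hne
  have insert_larger (hreach : IsStdReachable G n (insert v S)) :
      ∃ T, IsStdReachable G n T ∧ IsPSDForcingSet G T ∧ S.ncard < T.ncard :=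
    ⟨insert v S, hreach, hpsd.mono (Set.subset_insert _ _),
      Set.ncard_lt_ncard (Set.ssubset_insert hL.notMem)⟩
  rcases hL.stdStep_or_exists_adj_notMem with hstd | ⟨d, hd, hdL, hbd⟩
  · exact insert_larger (hS.insert hstd)
  have hswap := hL.isStdReachable_swap hG hS hd hdL hbd
  by_cases hLv : L = {v}
  · subst hLv
    have hback := hswap.insert hL.stdStep_swap_of_eq_singleton
    rw [Set.insert_comm, Set.insert_sdiff_self_of_mem hL.source_mem] at hback
    exact insert_larger hback
  · have hlt : (L \ {v}).ncard < K.ncard :=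
      (Set.ncard_sdiff_singleton_lt_of_mem hL.target_mem).trans_le (Set.ncard_le_ncard hLK)
    have hLne : (L \ {v}).Nonempty :=
      Set.nonempty_of_not_subset fun h =>
        hLv (h.antisymm (Set.singleton_subset_iff.mpr hL.target_mem))
    rw [← Set.ncard_exchange hL.notMem hL.source_mem]
    exact ih _ hlt hswap (hL.isPSDForcingSet_swap hpsd) hL.isWhitePart_sdiff_singleton hLne rfl

theorem ClawFree.isStdReachable_univ [Finite V] (hG : ClawFree G) (hB : IsPSDForcingSet G B) :
    IsStdReachable G B.ncard Set.univ := by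
  obtain ⟨S, ⟨hS, hpsd⟩, hmax⟩ := Set.exists_max_image
    {S | IsStdReachable G B.ncard S ∧ IsPSDForcingSet G S} Set.ncard (Set.toFinite _)
    ⟨B, ⟨B, Derives.refl B, rfl⟩, hB⟩
  suffices hS_univ : S = Set.univ from hS_univ ▸ hS
  by_contra hne
  have hwhite : IsWhitePart G S Sᶜ := ⟨subset_rfl, fun _ _ _ hy _ => hy⟩
  obtain ⟨T, hT, hTpsd, hlt⟩ := hG.exists_isStdReachable_ncard_lt hS hpsd hwhite
    (Set.nonempty_compl.mpr hne)
  exact hlt.not_ge (hmax T ⟨hT, hTpsd⟩)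

theorem ClawFree.Zplus_eq_Z [Finite V] (hG : ClawFree G) : Zplus G = Z G := by
  unfold Zplus Z
  congr 1
  ext n
  constructor
  · rintro ⟨B, hB, rfl⟩
    exact hG.isStdReachable_univ hB
  · rintro ⟨B, hB, rfl⟩
    exact ⟨B, hB.isPSDForcingSet, rfl⟩

section Star

/-- A fort is a nonempty vertex set such that no vertex outside it has exactly one neighbor in it.
Forts obstruct standard forcing: every standard forcing set meets every fort. -/
structure IsFort (G : SimpleGraph V) (F : Set V) : Prop where
  nonempty : F.Nonempty
  exists_ne_adj : ∀ ⦃u⦄, u ∉ F → ∀ ⦃v⦄, v ∈ F → G.Adj u v → ∃ w ∈ F, w ≠ v ∧ G.Adj u w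

theorem IsFort.disjoint_of_derives {F : Set V} (hF : IsFort G F)
    (h : Derives (StdStep G) B S) (hB : Disjoint B F) : Disjoint S F := by
  induction h with
  | refl => exact hB
  | tail _ hstep ih =>
    obtain ⟨huS, -, huv, hunique⟩ := hstep
    refine Set.disjoint_insert_left.mpr ⟨fun hvF => ?_, ih⟩
    obtain ⟨w, hwF, hwv, huw⟩ := hF.exists_ne_adj (ih.notMem_of_mem_left huS) hvF huv
    exact hwv (hunique w huw (ih.notMem_of_mem_right hwF))

theorem IsFort.not_disjoint {F : Set V} (hF : IsFort G F) (hB : IsStdForcingSet G B) :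
    ¬ Disjoint B F := fun h =>
  hF.nonempty.ne_empty (Set.univ_disjoint.mp (hF.disjoint_of_derives hB h))

theorem isFort_starGraph_pair {x y : V} (hx : x ≠ r) (hy : y ≠ r) (hxy : x ≠ y) :
    IsFort (starGraph r) {x, y} where
  nonempty := Set.insert_nonempty _ _
  exists_ne_adj := by
    intro u hu v hv huv
    obtain rfl : u = r := by grind [starGraph_adj]
    rcases hv with rfl | rfl
    · exact ⟨y, by simp, hxy.symm, starGraph_center_adj hy.symm⟩
    · exact ⟨x, by simp, hxy, starGraph_center_adj hx.symm⟩

theorem card_le_Z_starGraph_add_two [Finite V] (r : V) : Nat.card V ≤ Z (starGraph r) + 2 := by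
  obtain ⟨B, hB, hcard⟩ := Nat.sInf_mem
    (s := {n | ∃ B, IsStdForcingSet (starGraph r) B ∧ B.ncard = n})
    ⟨_, Set.univ, Derives.refl _, rfl⟩
  have hwhite : (Bᶜ \ {r}).ncard ≤ 1 := by
    rw [Set.ncard_le_one]
    intro x hx y hy
    by_contra hxy
    refine (isFort_starGraph_pair hx.2 hy.2 hxy).not_disjoint hB ?_
    simpa using ⟨hx.1, hy.1⟩
  have hcompl := Set.ncard_le_ncard_sdiff_add_ncard Bᶜ {r}
  have htotal := Set.ncard_add_ncard_compl B
  rw [Set.ncard_singleton] at hcompl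
  change B.ncard = Z (starGraph r) at hcard
  omega

theorem psdStep_starGraph (hr : r ∈ S) (hv : v ∉ S) : PSDStep (starGraph r) S r v := by
  have hvr : r ≠ v := fun h => hv (h ▸ hr)
  refine psdStep_iff_exists_forcesWithin.mpr ⟨{v},
    { subset_compl := by simpa using hv
      mem_of_adj := by grind [starGraph_adj]
      source_mem := hr
      adj := starGraph_center_adj hvr
      target_mem := rfl
      eq_target := fun _ hw _ => hw }⟩

theorem Zplus_starGraph_le_one [Finite V] (r : V) : Zplus (starGraph r) ≤ 1 := by
  refine Nat.sInf_le ⟨{r}, ?_, Set.ncard_singleton r⟩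
  refine Set.Finite.induction_to_univ {r} (Derives.refl _) fun S hS hder => ?_
  obtain ⟨v, hv⟩ := (Set.ne_univ_iff_exists_notMem S).mp hS
  exact ⟨v, hv, hder.tail (psdStep_starGraph (hder.subset rfl) hv)⟩

theorem eq_starGraph_of_iso {α β : Type*} [Unique α] (e : G ≃g completeBipartiteGraph α β) :
    G = starGraph (e.symm (Sum.inl default)) := by
  ext x y
  rw [← e.map_adj_iff, starGraph_adj, ← e.injective.ne_iff, ← e.injective.eq_iff,
    ← e.injective.eq_iff, e.apply_symm_apply]
  rcases e x with a | a <;> rcases e y with b | b <;> simp [Unique.eq_default]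

theorem Zplus_ne_Z_of_iso_claw (e : G ≃g completeBipartiteGraph (Fin 1) (Fin 3)) :
    Zplus G ≠ Z G := by
  have : Finite V := Finite.of_equiv _ e.symm.toEquiv
  have hcard : Nat.card V = 4 := by simp [Nat.card_congr e.toEquiv]
  rw [eq_starGraph_of_iso e]
  have hZplus := Zplus_starGraph_le_one (e.symm (Sum.inl default))
  have hZ := card_le_Z_starGraph_add_two (e.symm (Sum.inl default))
  omega

end Star

end

/-- A finite simple graph is `(Z₊, Z)`-perfect (i.e. `Z₊(H) = Z(H)` for every
induced subgraph `H` of `G`) if and only if it is claw-free. -/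
theorem ZplusZ_perfect_iff_clawFree {V : Type*} [Fintype V] (G : SimpleGraph V) :
    (∀ s : Set V, Zplus (G.induce s) = Z (G.induce s)) ↔ ClawFree G := by
  constructor
  · rintro hperfect ⟨s, ⟨e⟩⟩
    exact Zplus_ne_Z_of_iso_claw e (hperfect s)
  · exact fun hG s => (hG.induce s).Zplus_eq_Z
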